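/- For every integer n > 3, the TFSM B_n with only point intervals has no homing sequence: no timed input sequence is homing for B_n. -/

import Mathlib

/-!
Only the timestamps `1, 2, …, m` can be executed by `B_n`, and then every state executes them, the
input acting as the rotation `j ↦ j + 1`. On a run through `s_{n-2}` and then `s_{n-1}` the delays
`3, 1` produce outputs at times `t + 3, t + 2`, where the usual delays `2, 2` would produce
`t + 2, t + 3`: after sorting, the two are indistinguishable (`rawOutputs_perm`). Hence every run
that neither starts nor ends at `s_{n-1}` has the same timed outputs, namely the inputs delayed
by `2`. At most two initial states are excluded, so since `n ≥ 4` two distinct initial states have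
equal timed outputs, while the rotation keeps their final states distinct.
-/

/-- A timed guard: an interval with natural-number endpoints, left-closed, and
either right-open (`rightClosed = false`, i.e. `[lo, hi)`) or right-closed
(`rightClosed = true`, i.e. `[lo, hi]`; point intervals are `[u,u]`). -/
structure Guard where
  lo : ℕ
  hi : ℕ
  rightClosed : Bool
deriving DecidableEq

/-- Membership of a timestamp in a guard. -/
def GuardMem (g : Guard) (t : ℝ) : Prop :=
  (g.lo : ℝ) ≤ t ∧ (if g.rightClosed then t ≤ (g.hi : ℝ) else t < (g.hi : ℝ))

/-- Guard inclusion (as sets of timestamps). -/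
def GuardSub (g g' : Guard) : Prop := ∀ t : ℝ, GuardMem g t → GuardMem g' t

/-- A transition of a TFSM with output delays: source state, input, timed guard,
output, positive integer output delay, destination state. -/
structure TTrans (S I O : Type) where
  src : S
  inp : I
  guard : Guard
  out : O
  delay : ℕ+
  dst : S

/-- A TFSM with output delays over states `S`, inputs `I`, outputs `O`,
given by its transition relation. -/
abbrev TFSM (S I O : Type) := Set (TTrans S I O)

variable {S I O A B : Type}

/-- Determinism: any two distinct transitions from the same state on the same input
have disjoint guards. -/
def TFSMDeterministic (M : TFSM S I O) : Prop :=
  ∀ tr ∈ M, ∀ tr' ∈ M, tr.src = tr'.src → tr.inp = tr'.inp → tr ≠ tr' →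
    ∀ t : ℝ, ¬ (GuardMem tr.guard t ∧ GuardMem tr'.guard t)

/-- A timed input sequence: nonnegative, nondecreasing timestamps. -/
def IsTimedInputSeq (α : List (I × ℝ)) : Prop :=
  (∀ p ∈ α, 0 ≤ p.2) ∧ List.Chain' (· ≤ ·) (α.map Prod.snd)

/-- `TRunTo M s t0 α trs sf`: starting at state `s` at time `t0`, the timed input
sequence `α` induces the sequence of transitions `trs`, ending at state `sf`. -/
inductive TRunTo (M : TFSM S I O) : S → ℝ → List (I × ℝ) → List (TTrans S I O) → S → Prop
  | nil (s : S) (t0 : ℝ) : TRunTo M s t0 [] [] s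
  | cons {s sf : S} {t0 t : ℝ} {i : I} {tr : TTrans S I O}
      {rest : List (I × ℝ)} {trs : List (TTrans S I O)} :
      tr ∈ M → tr.src = s → tr.inp = i → GuardMem tr.guard (t - t0) →
      TRunTo M tr.dst t rest trs sf →
      TRunTo M s t0 ((i, t) :: rest) (tr :: trs) sf

/-- `α` induces the sequence of transitions `trs` from state `s`. -/
def TInduces (M : TFSM S I O) (s : S) (α : List (I × ℝ)) (trs : List (TTrans S I O)) : Prop :=
  ∃ sf : S, TRunTo M s 0 α trs sf

/-- `Dom(s)`: the timed input sequences inducing at least one sequence of transitions from `s`. -/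
def TDom (M : TFSM S I O) (s : S) : Set (List (I × ℝ)) :=
  { α | IsTimedInputSeq α ∧ ∃ trs, TInduces M s α trs }

/-- `next_state(s, α) = sf` (as a relation, since `next_state` is partial). -/
def TReaches (M : TFSM S I O) (s : S) (α : List (I × ℝ)) (sf : S) : Prop :=
  ∃ trs, TRunTo M s 0 α trs sf

/-- The timed outputs of a run: the `j`-th transition produces its output at time
`t_j + d_j`. -/
def rawOutputs (α : List (I × ℝ)) (trs : List (TTrans S I O)) : List (O × ℝ) :=
  List.zipWith (fun p tr => (tr.out, p.2 + ((tr.delay : ℕ) : ℝ))) α trs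

/-- `timed_out(s, α)`: all time-sorted reorderings of the timed outputs of the run of `α` at `s`. -/
def timedOut (M : TFSM S I O) (s : S) (α : List (I × ℝ)) : Set (List (O × ℝ)) :=
  { β | ∃ trs sf, TRunTo M s 0 α trs sf ∧ List.Perm β (rawOutputs α trs) ∧
        List.Chain' (· ≤ ·) (β.map Prod.snd) }

/-- Homing sequence for a TFSM with output delays. -/
def THoming (M : TFSM S I O) (α : List (I × ℝ)) : Prop :=
  IsTimedInputSeq α ∧ ∀ s1 s2 : S, timedOut M s1 α = timedOut M s2 α →
    ∃ sf : S, TReaches M s1 α sf ∧ TReaches M s2 α sf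

/-- Synchronizing sequence for a TFSM with output delays. -/
def TSync (M : TFSM S I O) (α : List (I × ℝ)) : Prop :=
  IsTimedInputSeq α ∧ ∃ sf : S, ∀ s : S, TReaches M s α sf

/-- A timed input sequence is non-integer if the difference of any two distinct
timestamps is not an integer. -/
def NonInteger (α : List (I × ℝ)) : Prop :=
  ∀ j k : Fin α.length, j ≠ k → ∀ z : ℤ, (α.get j).2 - (α.get k).2 ≠ (z : ℝ)

/-- A transition of an (untimed) FSM. -/
structure FTrans (S A B : Type) where
  src : S
  inp : A
  out : B
  dst : S

/-- An (untimed) FSM given by its transition relation. -/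
abbrev UntimedFSM (S A B : Type) := Set (FTrans S A B)

/-- FSM run: input sequence, produced output sequence, final state. -/
inductive FRunTo (T : UntimedFSM S A B) : S → List A → List B → S → Prop
  | nil (s : S) : FRunTo T s [] [] s
  | cons {s sf : S} {a : A} {rest : List A} {γ : List B} {f : FTrans S A B} :
      f ∈ T → f.src = s → f.inp = a → FRunTo T f.dst rest γ sf →
      FRunTo T s (a :: rest) (f.out :: γ) sf

def FReaches (T : UntimedFSM S A B) (s : S) (β : List A) (sf : S) : Prop :=
  ∃ γ, FRunTo T s β γ sf

/-- `out(s, β)` for an FSM (a set, i.e. a partial value, since the FSM may be partial). -/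
def FOut (T : UntimedFSM S A B) (s : S) (β : List A) : Set (List B) :=
  { γ | ∃ sf, FRunTo T s β γ sf }

def FDeterministic (T : UntimedFSM S A B) : Prop :=
  ∀ f ∈ T, ∀ f' ∈ T, f.src = f'.src → f.inp = f'.inp → f = f'

/-- Completeness of an FSM relative to an input alphabet `A0`. -/
def FCompleteOn (T : UntimedFSM S A B) (A0 : Set A) : Prop :=
  ∀ s : S, ∀ a ∈ A0, ∃ f ∈ T, f.src = s ∧ f.inp = a

/-- Synchronizing sequence for an FSM. -/
def FSync (T : UntimedFSM S A B) (β : List A) : Prop :=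
  ∃ sf : S, ∀ s : S, FReaches T s β sf

/-- Homing sequence for an FSM. -/
def FHoming (T : UntimedFSM S A B) (β : List A) : Prop :=
  ∀ s1 s2 : S, FOut T s1 β = FOut T s2 β →
    ∃ sf : S, FReaches T s1 β sf ∧ FReaches T s2 β sf

/-- The guards appearing on transitions labeled with input `i`. -/
def guardsOf (M : TFSM S I O) (i : I) : Set Guard :=
  { g | ∃ tr ∈ M, tr.inp = i ∧ tr.guard = g }

/-- Boundary points of the guards labeled `i`. -/
def boundaries (M : TFSM S I O) (i : I) : Set ℕ :=
  { p | ∃ g ∈ guardsOf M i, g.lo = p ∨ g.hi = p }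

/-- `Ḡ_i`: the half-open intervals determined by consecutive boundary points of `G_i`. -/
def refinedGuards (M : TFSM S I O) (i : I) : Set Guard :=
  { g | g.rightClosed = false ∧ g.lo ∈ boundaries M i ∧ g.hi ∈ boundaries M i ∧
        g.lo < g.hi ∧ ∀ r ∈ boundaries M i, ¬ (g.lo < r ∧ r < g.hi) }

/-- The abstract input alphabet `I_G = {(i, g) : g ∈ Ḡ_i}`. -/
def absInputs (M : TFSM S I O) : Set (I × Guard) :=
  { p | p.2 ∈ refinedGuards M p.1 }

/-- The region FSM `R(S)` of a TFSM with output delays. -/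
def regionFSM (M : TFSM S I O) : UntimedFSM S (I × Guard) (O × ℕ+) :=
  { f | f.inp ∈ absInputs M ∧ ∃ tr ∈ M, tr.src = f.src ∧ tr.inp = f.inp.1 ∧
        tr.out = f.out.1 ∧ tr.delay = f.out.2 ∧ tr.dst = f.dst ∧ GuardSub f.inp.2 tr.guard }

/-- All guards are half-open intervals `[u, v)` with `u < v`. -/
def HalfOpenGuards (M : TFSM S I O) : Prop :=
  ∀ tr ∈ M, tr.guard.rightClosed = false ∧ tr.guard.lo < tr.guard.hi

/-- Weak completeness: all states have the same domain. -/
def WeaklyComplete (M : TFSM S I O) : Prop :=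
  ∀ s s' : S, TDom M s = TDom M s'

/-- `Projects M t0 α β`: `β` is the untimed projection `[α]_{I_G}` of `α`
(relative to previous timestamp `t0`). -/
inductive Projects (M : TFSM S I O) : ℝ → List (I × ℝ) → List (I × Guard) → Prop
  | nil (t0 : ℝ) : Projects M t0 [] []
  | cons {t0 t : ℝ} {i : I} {g : Guard} {rest : List (I × ℝ)} {brest : List (I × Guard)} :
      g ∈ refinedGuards M i → GuardMem g (t - t0) →
      Projects M t rest brest →
      Projects M t0 ((i, t) :: rest) ((i, g) :: brest)

/-- All guards are point intervals `[u, u]` with `u` a positive integer. -/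
def PointIntervals (M : TFSM S I O) : Prop :=
  ∀ tr ∈ M, tr.guard.rightClosed = true ∧ tr.guard.lo = tr.guard.hi ∧ 0 < tr.guard.lo

/-- The region FSM of a TFSM with only point intervals: abstract inputs are the
(input, guard) pairs appearing on transitions. -/
def pointRegionFSM (M : TFSM S I O) : UntimedFSM S (I × Guard) (O × ℕ+) :=
  { f | ∃ tr ∈ M, tr.src = f.src ∧ (tr.inp, tr.guard) = f.inp ∧
        (tr.out, tr.delay) = f.out ∧ tr.dst = f.dst }

/-- `t(α)`: the last timestamp of `α` (0 for the empty sequence). -/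
def tEnd (α : List (I × ℝ)) : ℝ := (α.map Prod.snd).getLastD 0

/-- The number of timed outputs of the run produced at or after time `t(α)`
(counted with multiplicity). -/
noncomputable def tailCount (α : List (I × ℝ)) (trs : List (TTrans S I O)) : ℕ :=
  ((rawOutputs α trs).filter (fun p => decide (tEnd α ≤ p.2))).length

/-- The timed output tail of a run: the multiset of `(o, τ - t(α))` over timed
outputs `(o, τ)` of the run with `τ ≥ t(α)`. -/
noncomputable def tailOf (α : List (I × ℝ)) (trs : List (TTrans S I O)) : Multiset (O × ℝ) :=
  ↑(((rawOutputs α trs).filter (fun p => decide (tEnd α ≤ p.2))).map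
      (fun p => (p.1, p.2 - tEnd α)))

/-- The set of all timed output tails of the TFSM, together with the empty tail. -/
def Tout (M : TFSM S I O) : Set (Multiset (O × ℝ)) :=
  insert 0 { m | ∃ (s : S) (α : List (I × ℝ)) (trs : List (TTrans S I O)) (sf : S),
    α ∈ TDom M s ∧ TRunTo M s 0 α trs sf ∧ m = tailOf α trs }

/-- The output delay at state `j` of the machine `B_n`. -/
def BnDelay (n : ℕ) (j : Fin n) : ℕ+ :=
  if (j : ℕ) = n - 2 then 3 else if (j : ℕ) = n - 1 then 1 else 2

/-- The transition of `B_n` out of state `j`. -/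
def BnTrans (n : ℕ) [NeZero n] (j : Fin n) : TTrans (Fin n) Unit Unit :=
  ⟨j, (), ⟨1, 1, true⟩, (), BnDelay n j, j + 1⟩

/-- The TFSM `B_n` with only point intervals. -/
def Bn (n : ℕ) [NeZero n] : TFSM (Fin n) Unit Unit := Set.range (BnTrans n)

lemma Bn_val_add_one {n : ℕ} [NeZero n] (hn : 3 < n) (j : Fin n) (hj : (j : ℕ) ≠ n - 1) :
    ((j + 1 : Fin n) : ℕ) = j + 1 := by
  have := j.isLt
  rw [Fin.val_add, Fin.coe_ofNat_eq_mod, Nat.mod_eq_of_lt (show 1 < n by omega),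
    Nat.mod_eq_of_lt (by omega)]

lemma Bn_val_add_one_last {n : ℕ} [NeZero n] (hn : 3 < n) (j : Fin n) (hj : (j : ℕ) = n - 1) :
    ((j + 1 : Fin n) : ℕ) = 0 := by
  rw [Fin.val_add, Fin.coe_ofNat_eq_mod, Nat.mod_eq_of_lt (show 1 < n by omega), hj,
    Nat.sub_add_cancel (by omega), Nat.mod_self]

/-- A run of `B_n` rotates the states by the number of inputs; whether an input sequence can be
executed does not depend on the initial state. -/
lemma Bn_run_rotate {n : ℕ} [NeZero n] {s sf : Fin n} {t0 : ℝ} {α : List (Unit × ℝ)}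
    {trs : List (TTrans (Fin n) Unit Unit)} (h : TRunTo (Bn n) s t0 α trs sf) :
    sf = s + α.length • (1 : Fin n) ∧
      ∀ s', ∃ trs', TRunTo (Bn n) s' t0 α trs' (s' + α.length • (1 : Fin n)) := by
  induction h with
  | nil s t0 => exact ⟨by simp, fun s' => ⟨[], by simpa using TRunTo.nil s' t0⟩⟩
  | @cons s sf t0 t i tr rest trs htr hs hi hg _ ih =>
    obtain ⟨j, rfl⟩ := htr
    obtain ⟨ih1, ih2⟩ := ih
    have key : ∀ x : Fin n, x + 1 + rest.length • (1 : Fin n)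
        = x + ((i, t) :: rest).length • (1 : Fin n) := by
      intro x
      rw [List.length_cons, succ_nsmul', add_assoc]
    refine ⟨?_, fun s' => ?_⟩
    · rw [← key, ih1, ← hs]; rfl
    · obtain ⟨trs', h'⟩ := ih2 (s' + 1)
      refine ⟨BnTrans n s' :: trs', ?_⟩
      rw [← key]
      exact TRunTo.cons ⟨s', rfl⟩ rfl rfl hg h'

/-- The timed outputs of a run of `B_n` ending outside `s_{n-1}` are the inputs delayed by `2`, up
to order. For a run starting at `s_{n-1}` this holds once one adds the output at time `t0 + 3` of
the transition from `s_{n-2}` taken at time `t0`, in place of an output at time `t0 + 2`. -/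
lemma rawOutputs_perm {n : ℕ} [NeZero n] (hn : 3 < n) {s sf : Fin n} {t0 : ℝ}
    {α : List (Unit × ℝ)} {trs : List (TTrans (Fin n) Unit Unit)}
    (h : TRunTo (Bn n) s t0 α trs sf) (hsf : (sf : ℕ) ≠ n - 1) :
    ((s : ℕ) ≠ n - 1 → (rawOutputs α trs).Perm (α.map fun p => ((), p.2 + 2))) ∧
    ((s : ℕ) = n - 1 →
      (((), t0 + 3) :: rawOutputs α trs).Perm (((), t0 + 2) :: α.map fun p => ((), p.2 + 2))) := by
  induction h with
  | nil s t0 => exact ⟨fun _ => by simp [rawOutputs], fun h => absurd h hsf⟩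
  | @cons s sf t0 t i tr rest trs htr hs hi hg _ ih =>
    obtain ⟨j, rfl⟩ := htr
    obtain ⟨ih1, ih2⟩ := ih hsf
    obtain rfl : j = s := hs
    have ht : t = t0 + 1 := by
      obtain ⟨h1, h2⟩ := hg
      simp only [BnTrans, Nat.cast_one, if_true] at h1 h2
      linarith
    have hraw : rawOutputs ((i, t) :: rest) (BnTrans n j :: trs)
        = ((), t + ((BnDelay n j : ℕ) : ℝ)) :: rawOutputs rest trs := rfl
    rw [hraw, List.map_cons]
    refine ⟨fun hj => ?_, fun hj => ?_⟩
    · have hv := Bn_val_add_one hn j hj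
      by_cases hj2 : (j : ℕ) = n - 2
      · have hd : BnDelay n j = 3 := by simp [BnDelay, hj2]
        have := ih2 (show ((j + 1 : Fin n) : ℕ) = n - 1 by omega)
        rw [hd]
        exact this
      · have hd : BnDelay n j = 2 := by simp [BnDelay, hj2, hj]
        have := ih1 (show ((j + 1 : Fin n) : ℕ) ≠ n - 1 by omega)
        rw [hd]
        exact this.cons _
    · have hv := Bn_val_add_one_last hn j hj
      have hd : BnDelay n j = 1 := by
        have : n - 1 ≠ n - 2 := by omega
        simp [BnDelay, hj, this]
      have := ih1 (show ((j + 1 : Fin n) : ℕ) ≠ n - 1 by omega)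
      have e1 : t + (((1 : ℕ+) : ℕ) : ℝ) = t0 + 2 := by rw [ht]; norm_num; ring
      have e2 : t + 2 = t0 + 3 := by rw [ht]; ring
      rw [hd, e1, e2]
      exact (List.Perm.swap _ _ _).trans ((this.cons _).cons _)

/-- for every `n > 3`, the TFSM `B_n` with only point intervals has no
homing sequence. -/
theorem stmt16 (n : ℕ) [NeZero n] (hn : 3 < n) :
    ∀ α : List (Unit × ℝ), ¬ THoming (Bn n) α := by
  rintro α ⟨-, hom⟩
  -- Comparing a state with itself shows that a homing sequence is executable.
  obtain ⟨_, ⟨trs0, h0⟩, -⟩ := hom 0 0 rfl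
  have run := (Bn_run_rotate h0).2
  set m : Fin n := α.length • (1 : Fin n) with hm
  let last : Fin n := ⟨n - 1, by omega⟩
  have hout : ∀ s : Fin n, s ≠ last → s + m ≠ last → timedOut (Bn n) s α =
      {β | β.Perm (α.map fun p => ((), p.2 + 2)) ∧ List.Chain' (· ≤ ·) (β.map Prod.snd)} := by
    intro s hs hsm
    have hs' : (s : ℕ) ≠ n - 1 := fun h => hs (Fin.ext h)
    have hsm' : ((s + m : Fin n) : ℕ) ≠ n - 1 := fun h => hsm (Fin.ext h)
    ext β
    constructor
    · rintro ⟨trs, sf, hr, hp, hc⟩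
      have hsf : sf = s + m := (Bn_run_rotate hr).1
      exact ⟨hp.trans ((rawOutputs_perm hn hr (hsf ▸ hsm')).1 hs'), hc⟩
    · rintro ⟨hp, hc⟩
      obtain ⟨trs, hr⟩ := run s
      exact ⟨trs, _, hr, hp.trans ((rawOutputs_perm hn hr hsm').1 hs').symm, hc⟩
  have hcard : 1 < (({last, last - m} : Finset (Fin n))ᶜ).card := by
    have h2 := Finset.card_le_two (a := last) (b := last - m)
    rw [Finset.card_compl, Fintype.card_fin]
    omega
  obtain ⟨s1, hs1, s2, hs2, hne⟩ := Finset.one_lt_card.1 hcard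
  simp only [Finset.mem_compl, Finset.mem_insert, Finset.mem_singleton, not_or,
    eq_sub_iff_add_eq] at hs1 hs2
  obtain ⟨sf, ⟨_, r1⟩, ⟨_, r2⟩⟩ :=
    hom s1 s2 ((hout s1 hs1.1 hs1.2).trans (hout s2 hs2.1 hs2.2).symm)
  exact hne (add_right_cancel ((Bn_run_rotate r1).1.symm.trans (Bn_run_rotate r2).1))
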